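/- arXiv:1805.02018 — 4 statements merged into one kernel-verified Lean document; each statement's English description precedes it below -/
import Mathlib

section
/- Let X be a complex vector space and 𝔔 a Hermitian form on X. Assume X = U + W for subspaces U, W with 𝔔(u,w) = 0 for all u ∈ U and w ∈ W, and assume m⁻(𝔔|_U) and m⁻(𝔔|_W) are finite. Then m⁻(𝔔) = m⁻(𝔔|_U) + m⁻(𝔔|_W). -/
open Module Submodule

noncomputable section

variable {X : Type*} [AddCommGroup X] [Module ℂ X]

/-- The `Q`-orthogonal complement (polar) `V^𝔔` of a subspace `V` with respect to a
sesquilinear form `Q` (conjugate-linear in the first variable). -/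
def qPolar (Q : X →ₗ⋆[ℂ] X →ₗ[ℂ] ℂ) (V : Submodule ℂ X) : Submodule ℂ X where
  carrier := {x | ∀ v ∈ V, Q x v = 0}
  add_mem' := by
    intro a b ha hb v hv
    simp only [map_add, LinearMap.add_apply, ha v hv, hb v hv, add_zero]
  zero_mem' := by
    intro v hv
    simp
  smul_mem' := by
    intro c x hx v hv
    simp only [LinearMap.map_smulₛₗ, LinearMap.smul_apply, hx v hv, smul_zero]

/-- The kernel of the form `Q`, i.e. `X^𝔔`. -/
def qKer (Q : X →ₗ⋆[ℂ] X →ₗ[ℂ] ℂ) : Submodule ℂ X := qPolar Q ⊤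

/-- The Morse index `m⁻(𝔔|_V)`: the supremum of dimensions of subspaces of `V`
on which `Q` is negative definite, as an extended natural number. -/
def negIdx (Q : X →ₗ⋆[ℂ] X →ₗ[ℂ] ℂ) (V : Submodule ℂ X) : ℕ∞ :=
  sSup {k : ℕ∞ | ∃ W : Submodule ℂ X, W ≤ V ∧ FiniteDimensional ℂ W ∧
    (∀ x ∈ W, x ≠ 0 → (Q x x).re < 0) ∧ k = (Module.finrank ℂ W : ℕ∞)}

lemma morse_neg_sup (Q : X →ₗ⋆[ℂ] X →ₗ[ℂ] ℂ)
    (hQ : ∀ x y, (starRingEnd ℂ) (Q x y) = Q y x)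
    (N M : Submodule ℂ X) [FiniteDimensional ℂ N] [FiniteDimensional ℂ M]
    (hN : ∀ x ∈ N, x ≠ 0 → (Q x x).re < 0) (hM : ∀ x ∈ M, x ≠ 0 → (Q x x).re < 0)
    (h : ∀ n ∈ N, ∀ m ∈ M, Q n m = 0) :
    (∀ x ∈ N ⊔ M, x ≠ 0 → (Q x x).re < 0) ∧
      finrank ℂ (N ⊔ M : Submodule ℂ X) = finrank ℂ N + finrank ℂ M := by
  constructor
  · intro x hx hx0
    obtain ⟨n, hn, m, hm, rfl⟩ := Submodule.mem_sup.1 hx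
    have h1 := h n hn m hm
    have h2 : Q m n = 0 := by rw [← hQ, h1, map_zero]
    have e : (Q (n + m) (n + m)).re = (Q n n).re + (Q m m).re := by
      simp [h1, h2]
    rw [e]
    by_cases hn0 : n = 0
    · have hm0 : m ≠ 0 := by
        rintro rfl
        exact hx0 (by simp [hn0])
      have := hM m hm hm0
      simpa [hn0] using this
    · have a := hN n hn hn0
      by_cases hm0 : m = 0
      · simpa [hm0] using a
      · have := hM m hm hm0
        linarith
  · have hinf : N ⊓ M = ⊥ := by
      rw [eq_bot_iff]
      intro x hx
      by_contra hx0
      have := hN x hx.1 hx0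
      rw [h x hx.1 x hx.2] at this
      simp at this
    have := Submodule.finrank_sup_add_finrank_inf_eq N M
    rw [hinf, finrank_bot] at this
    simpa using this

lemma exists_max (Q : X →ₗ⋆[ℂ] X →ₗ[ℂ] ℂ) (V : Submodule ℂ X) (hV : negIdx Q V ≠ ⊤) :
    ∃ N : Submodule ℂ X, N ≤ V ∧ FiniteDimensional ℂ N ∧
      (∀ x ∈ N, x ≠ 0 → (Q x x).re < 0) ∧ negIdx Q V = (finrank ℂ N : ℕ∞) := by
  have hne : {k : ℕ∞ | ∃ W : Submodule ℂ X, W ≤ V ∧ FiniteDimensional ℂ W ∧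
    (∀ x ∈ W, x ≠ 0 → (Q x x).re < 0) ∧ k = (Module.finrank ℂ W : ℕ∞)}.Nonempty :=
    ⟨_, ⊥, bot_le, inferInstance, fun x hx h0 => absurd ((Submodule.mem_bot ℂ).1 hx) h0, rfl⟩
  have := hne.to_subtype
  exact ENat.sSup_mem_of_nonempty_of_lt_top (lt_top_iff_ne_top.2 hV)

lemma le_negIdx (Q : X →ₗ⋆[ℂ] X →ₗ[ℂ] ℂ) (V N : Submodule ℂ X) (h : N ≤ V)
    (hf : FiniteDimensional ℂ N) (hN : ∀ x ∈ N, x ≠ 0 → (Q x x).re < 0) :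
    (finrank ℂ N : ℕ∞) ≤ negIdx Q V :=
  le_sSup ⟨N, h, hf, hN, rfl⟩

lemma nonneg_of_max (Q : X →ₗ⋆[ℂ] X →ₗ[ℂ] ℂ)
    (hQ : ∀ x y, (starRingEnd ℂ) (Q x y) = Q y x)
    (V N : Submodule ℂ X) (h : N ≤ V)
    (hf : FiniteDimensional ℂ N) (hN : ∀ x ∈ N, x ≠ 0 → (Q x x).re < 0)
    (hmax : negIdx Q V = (finrank ℂ N : ℕ∞)) (u : X) (hu : u ∈ V)
    (ho : ∀ n ∈ N, Q n u = 0) : 0 ≤ (Q u u).re := by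
  by_contra hlt
  push Not at hlt
  have hu0 : u ≠ 0 := by
    rintro rfl
    simp at hlt
  have hS : ∀ x ∈ ℂ ∙ u, x ≠ 0 → (Q x x).re < 0 := by
    intro x hx hx0
    obtain ⟨c, rfl⟩ := Submodule.mem_span_singleton.1 hx
    have hc : c ≠ 0 := by
      rintro rfl
      simp at hx0
    have e : Q (c • u) (c • u) = ((Complex.normSq c : ℝ) : ℂ) * Q u u := by
      rw [Complex.normSq_eq_conj_mul_self]
      simp
      ring
    rw [e, Complex.re_ofReal_mul]
    exact mul_neg_of_pos_of_neg (Complex.normSq_pos.2 hc) hlt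
  have ho' : ∀ n ∈ N, ∀ m ∈ ℂ ∙ u, Q n m = 0 := by
    intro n hn m hm
    obtain ⟨c, rfl⟩ := Submodule.mem_span_singleton.1 hm
    simp [ho n hn]
  obtain ⟨h1, h2⟩ := morse_neg_sup Q hQ N (ℂ ∙ u) hN hS ho'
  have := le_negIdx Q V (N ⊔ ℂ ∙ u)
    (sup_le h ((Submodule.span_singleton_le_iff_mem _ _).2 hu)) inferInstance h1
  rw [hmax, h2, finrank_span_singleton hu0] at this
  have := Nat.cast_le.1 this
  omega

/-- If `X = U + W` and `𝔔(u,w) = 0` for all `u ∈ U`, `w ∈ W`, then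
`m⁻(𝔔) = m⁻(𝔔|_U) + m⁻(𝔔|_W)`. -/
theorem morse_index_additive
    (Q : X →ₗ⋆[ℂ] X →ₗ[ℂ] ℂ)
    (hQ : ∀ x y, (starRingEnd ℂ) (Q x y) = Q y x)
    (U W : Submodule ℂ X) (hUW : U ⊔ W = ⊤)
    (horth : ∀ u ∈ U, ∀ w ∈ W, Q u w = 0)
    (hU : negIdx Q U ≠ ⊤) (hW : negIdx Q W ≠ ⊤) :
    negIdx Q ⊤ = negIdx Q U + negIdx Q W := by
  obtain ⟨N, hNU, hNf, hN, hNm⟩ := exists_max Q U hU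
  obtain ⟨M, hMW, hMf, hM, hMm⟩ := exists_max Q W hW
  apply le_antisymm
  · apply sSup_le
    rintro _ ⟨V, -, hVf, hV, rfl⟩
    rw [hNm, hMm, ← Nat.cast_add, Nat.cast_le]
    by_contra hlt
    push Not at hlt
    let bN := Module.finBasis ℂ N
    let bM := Module.finBasis ℂ M
    let f : V →ₗ[ℂ] ((Fin (finrank ℂ N) → ℂ) × (Fin (finrank ℂ M) → ℂ)) :=
      (LinearMap.prod (LinearMap.pi fun i => Q (bN i : X))
        (LinearMap.pi fun i => Q (bM i : X))).comp V.subtype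
    have hker : LinearMap.ker f ≠ ⊥ :=
      LinearMap.ker_ne_bot_of_finrank_lt (by simpa using hlt)
    obtain ⟨v, hv, hv0⟩ := Submodule.exists_mem_ne_zero_of_ne_bot hker
    have hfv : f v = 0 := hv
    have key : ∀ (N : Submodule ℂ X) (b : Basis (Fin (finrank ℂ N)) ℂ N),
        (∀ i, Q (b i : X) (v : X) = 0) → ∀ n ∈ N, Q n (v : X) = 0 := by
      intro N b hb n hn
      have := b.sum_repr ⟨n, hn⟩
      have e : n = ∑ i, b.repr ⟨n, hn⟩ i • (b i : X) := by
        have h3 := congrArg (Subtype.val) this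
        rw [Submodule.coe_sum] at h3
        exact h3.symm
      rw [e]
      simp [hb]
    have k1 := key N bN fun i => congrFun (congrArg Prod.fst hfv) i
    have k2 := key M bM fun i => congrFun (congrArg Prod.snd hfv) i
    obtain ⟨u, hu, w, hw, e⟩ := Submodule.mem_sup.1
      (show (v : X) ∈ U ⊔ W from hUW ▸ Submodule.mem_top)
    have horth' : ∀ w ∈ W, ∀ u ∈ U, Q w u = 0 := fun w hw u hu => by
      rw [← hQ, horth u hu w hw, map_zero]
    have p1 := nonneg_of_max Q hQ U N hNU hNf hN hNm u hu fun n hn => by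
      have := k1 n hn
      rwa [← e, map_add, horth n (hNU hn) w hw, add_zero] at this
    have p2 := nonneg_of_max Q hQ W M hMW hMf hM hMm w hw fun n hn => by
      have := k2 n hn
      rwa [← e, map_add, horth' n (hMW hn) u hu, zero_add] at this
    have p3 := hV v v.2 (by simpa using hv0)
    rw [← e] at p3
    simp [horth u hu w hw, horth' w hw u hu] at p3
    linarith
  · obtain ⟨h1, h2⟩ := morse_neg_sup Q hQ N M hN hM
      fun n hn m hm => horth n (hNU hn) m (hMW hm)
    rw [hNm, hMm, ← Nat.cast_add, ← h2]
    exact le_negIdx Q ⊤ _ le_top inferInstance h1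
end
end

section
/- Let X be a complex vector space and 𝔔 a Hermitian form on X. (i) If V ⊆ X is a subspace with dim X/V < ∞, then dim(V^𝔔/ker 𝔔) = dim(X/V^{𝔔𝔔}). (ii) If W ⊆ X is a finite-dimensional subspace, then dim(X/W^𝔔) = dim((W + ker 𝔔)/ker 𝔔). -/
open Module Submodule

noncomputable section

variable {X : Type*} [AddCommGroup X] [Module ℂ X]

theorem mem_qPolar_iff (Q : X →ₗ⋆[ℂ] X →ₗ[ℂ] ℂ) (V : Submodule ℂ X) (x : X) :
    x ∈ qPolar Q V ↔ ∀ v ∈ V, Q x v = 0 := Iff.rfl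

theorem q_symm_zero (Q : X →ₗ⋆[ℂ] X →ₗ[ℂ] ℂ)
    (hQ : ∀ x y, (starRingEnd ℂ) (Q x y) = Q y x) {x y : X} (h : Q x y = 0) : Q y x = 0 := by
  rw [← hQ, h, map_zero]

theorem polar_aux (Q : X →ₗ⋆[ℂ] X →ₗ[ℂ] ℂ)
    (hQ : ∀ x y, (starRingEnd ℂ) (Q x y) = Q y x) (W : Submodule ℂ X)
    (hW : FiniteDimensional ℂ ↥(W.map (qKer Q).mkQ)) :
    Module.finrank ℂ (X ⧸ qPolar Q W) = Module.finrank ℂ ↥(W.map (qKer Q).mkQ) := by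
  let b := Module.finBasis ℂ ↥(W.map (qKer Q).mkQ)
  have hex : ∀ i, ∃ w ∈ W, (qKer Q).mkQ w = (b i : X ⧸ qKer Q) := fun i => (b i).2
  choose w hwW hwb using hex
  let φ : X →ₗ[ℂ] (Fin (Module.finrank ℂ ↥(W.map (qKer Q).mkQ)) → ℂ) :=
    LinearMap.pi fun i => Q (w i)
  have hker : LinearMap.ker φ = qPolar Q W := by
    ext x
    rw [LinearMap.mem_ker, mem_qPolar_iff]
    constructor
    · intro hx v hv
      have hx' : ∀ i, Q x (w i) = 0 := fun i => q_symm_zero Q hQ (congrFun hx i)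
      let m : ↥(W.map (qKer Q).mkQ) := ⟨(qKer Q).mkQ v, v, hv, rfl⟩
      have h1 := congrArg Subtype.val (b.sum_repr m)
      have h2 : (qKer Q).mkQ (∑ i, b.repr m i • w i - v) = 0 := by
        rw [map_sub, map_sum, sub_eq_zero]
        simp only [map_smul, hwb]
        rw [Submodule.coe_sum] at h1
        exact h1
      have h3 : ∑ i, b.repr m i • w i - v ∈ qKer Q := by
        simpa only [Submodule.mkQ_apply, Submodule.Quotient.mk_eq_zero] using h2
      have h4 := q_symm_zero Q hQ (h3 x trivial)
      rw [map_sub, map_sum] at h4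
      simpa [hx'] using h4
    · intro hx
      funext i
      exact q_symm_zero Q hQ (hx _ (hwW i))
  have hsurj : LinearMap.range φ = ⊤ := by
    by_contra hne
    obtain ⟨f, hf0, hf⟩ := Submodule.exists_le_ker_of_lt_top _ (lt_top_iff_ne_top.2 hne)
    apply hf0
    have hfe : ∀ y, f y = ∑ i, y i * f (Pi.single i 1) := by
      intro y
      conv_lhs => rw [pi_eq_sum_univ' y]
      simp [map_sum]
    have hk : ∑ i, (starRingEnd ℂ) (f (Pi.single i 1)) • w i ∈ qKer Q := by
      intro x _
      have h1 : f (φ x) = 0 := hf ⟨x, rfl⟩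
      rw [hfe] at h1
      rw [map_sum, LinearMap.sum_apply, ← h1]
      refine Finset.sum_congr rfl fun i _ => ?_
      simp [φ, mul_comm]
    have hk2 : (qKer Q).mkQ (∑ i, (starRingEnd ℂ) (f (Pi.single i 1)) • w i) = 0 := by
      simpa only [Submodule.mkQ_apply, Submodule.Quotient.mk_eq_zero] using hk
    rw [map_sum] at hk2
    simp only [map_smul, hwb] at hk2
    have hk3 : ∑ i, (starRingEnd ℂ) (f (Pi.single i 1)) • b i = 0 := by
      apply Subtype.ext
      simpa using hk2
    have hz := Fintype.linearIndependent_iff.1 b.linearIndependent _ hk3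
    apply LinearMap.ext
    intro y
    rw [hfe]
    refine Finset.sum_eq_zero fun i _ => ?_
    have := hz i
    rw [map_eq_zero] at this
    rw [this, mul_zero]
  rw [← hker, LinearEquiv.finrank_eq φ.quotKerEquivRange, hsurj, finrank_top]
  simp

theorem polar_finite (Q : X →ₗ⋆[ℂ] X →ₗ[ℂ] ℂ)
    (hQ : ∀ x y, (starRingEnd ℂ) (Q x y) = Q y x) (V : Submodule ℂ X)
    (hV : Module.Finite ℂ (X ⧸ V)) :
    FiniteDimensional ℂ ↥((qPolar Q V).map (qKer Q).mkQ) := by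
  let b := Module.finBasis ℂ (X ⧸ V)
  choose u hu using fun i => V.mkQ_surjective (b i)
  let ψ : X →ₗ[ℂ] (Fin (Module.finrank ℂ (X ⧸ V)) → ℂ) := LinearMap.pi fun i => Q (u i)
  have hle : qKer Q ≤ LinearMap.ker ψ := by
    intro x hx
    rw [LinearMap.mem_ker]
    funext i
    exact q_symm_zero Q hQ (hx _ trivial)
  refine Module.Finite.of_injective
    (((qKer Q).liftQ ψ hle).domRestrict ((qPolar Q V).map (qKer Q).mkQ)) ?_
  rw [injective_iff_map_eq_zero]
  rintro ⟨_, x, hx, rfl⟩ h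
  have h' : ψ x = 0 := by simpa using h
  apply Subtype.ext
  have hxk : x ∈ qKer Q := by
    intro y _
    have hx' : ∀ i, Q x (u i) = 0 := fun i => q_symm_zero Q hQ (congrFun h' i)
    have h2 : V.mkQ (∑ i, b.repr (V.mkQ y) i • u i - y) = 0 := by
      rw [map_sub, map_sum, sub_eq_zero]
      simp only [map_smul, hu]
      exact b.sum_repr _
    have h3 : ∑ i, b.repr (V.mkQ y) i • u i - y ∈ V := by
      simpa only [Submodule.mkQ_apply, Submodule.Quotient.mk_eq_zero] using h2
    have h4 := hx _ h3
    rw [map_sub, map_sum] at h4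
    simpa [hx'] using h4
  simpa using hxk

/-- Dimension identities for `Q`-polars:
(i) if `dim X/V < ∞` then `dim(V^𝔔/ker 𝔔) = dim(X/V^{𝔔𝔔})`;
(ii) if `dim W < ∞` then `dim(X/W^𝔔) = dim((W + ker 𝔔)/ker 𝔔)`. -/
theorem dim_qPolar
    (Q : X →ₗ⋆[ℂ] X →ₗ[ℂ] ℂ)
    (hQ : ∀ x y, (starRingEnd ℂ) (Q x y) = Q y x) :
    (∀ V : Submodule ℂ X, Module.Finite ℂ (X ⧸ V) →
      Module.finrank ℂ ↥((qPolar Q V).map (qKer Q).mkQ)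
        = Module.finrank ℂ (X ⧸ qPolar Q (qPolar Q V)))
    ∧ (∀ W : Submodule ℂ X, FiniteDimensional ℂ W →
      Module.finrank ℂ (X ⧸ qPolar Q W)
        = Module.finrank ℂ ↥(W.map (qKer Q).mkQ)) := by
  refine ⟨fun V hV => ?_, fun W hW => ?_⟩
  · exact (polar_aux Q hQ _ (polar_finite Q hQ V hV)).symm
  · exact polar_aux Q hQ W inferInstance
end
end

section
/- Let V be any complex subspace of Λ_N = Λ^n_N⊕Λ^n_N ⊂ ℂ^{4n}, let V^⊥ be its orthogonal complement inside Λ_N, let 𝒥 = (−J)⊕J, and set Λ_V = 𝒥V^⊥ ⊕ V (a Lagrangian subspace of (ℂ^{4n}, −ω⊕ω)). Then i(Gr(I_{2n}), Λ_V, Λ_D) = n − dim(V^⊥ ∩ Gr(−I_n)), where Gr(−I_n) = {(u, −u) : u ∈ ℂ^n} is viewed as a subspace of Λ_N under the identification Λ_N ≅ ℂ^n⊕ℂ^n. -/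
open Matrix Module Submodule

noncomputable section

/-- `ℂ^{2n}`, indexed by `Fin n ⊕ Fin n` (the two `n`-blocks). -/
abbrev CV (n : ℕ) := (Fin n ⊕ Fin n) → ℂ

/-- The standard Hermitian inner product `⟨x,y⟩ = ∑ xᵢ conj(yᵢ)`. -/
def herm {m : Type*} [Fintype m] (x y : m → ℂ) : ℂ :=
  ∑ i, x i * (starRingEnd ℂ) (y i)

/-- The standard complex symplectic form `ω(x,y) = ⟨Jx, y⟩` on `ℂ^{2n}`,
where `J = [[0,-I],[I,0]]`. -/
def symForm (n : ℕ) (x y : CV n) : ℂ :=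
  herm ((Matrix.J (Fin n) ℂ).mulVec x) y

/-- The symplectic form `-ω ⊕ ω` on `ℂ^{2n} ⊕ ℂ^{2n}`. -/
def symForm2 (n : ℕ) (p q : CV n × CV n) : ℂ :=
  - symForm n p.1 q.1 + symForm n p.2 q.2

/-- A Lagrangian subspace of a complex symplectic space: `ω` vanishes on it and
it has (half) dimension `m`. -/
def IsLagrangian {X : Type*} [AddCommGroup X] [Module ℂ X]
    (w : X → X → ℂ) (m : ℕ) (Λ : Submodule ℂ X) : Prop :=
  (∀ x ∈ Λ, ∀ y ∈ Λ, w x y = 0) ∧ Module.finrank ℂ Λ = m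

/-- `m⁺(𝔔(α,β;κ))`: the dimension of a maximal subspace of `α ∩ (β + κ)` on which
the form `𝔔(x₁,x₂) = ω(y₁,z₂)` (with `x_j = y_j + z_j`, `y_j ∈ β`, `z_j ∈ κ`) is
positive definite. -/
def posInd {X : Type*} [AddCommGroup X] [Module ℂ X]
    (w : X → X → ℂ) (α β κ : Submodule ℂ X) : ℕ :=
  sSup {k : ℕ | ∃ P : Submodule ℂ X, P ≤ α ⊓ (β ⊔ κ) ∧
    (∀ x ∈ P, x ≠ 0 → ∀ y ∈ β, ∀ z ∈ κ, x = y + z → 0 < (w y z).re) ∧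
    k = Module.finrank ℂ P}

/-- The triple index `i(α,β,κ) = m⁺(𝔔(α,β;κ)) + dim(α∩κ) − dim(α∩β∩κ)`. -/
def tripleIdx {X : Type*} [AddCommGroup X] [Module ℂ X]
    (w : X → X → ℂ) (α β κ : Submodule ℂ X) : ℕ :=
  posInd w α β κ + Module.finrank ℂ ↥(α ⊓ κ) - Module.finrank ℂ ↥(α ⊓ β ⊓ κ)

/-- `Λ^n_D = ℂ^n ⊕ {0}`, the Dirichlet Lagrangian (second block vanishes). -/
def LnD (n : ℕ) : Submodule ℂ (CV n) :=
  LinearMap.ker (LinearMap.funLeft ℂ ℂ (Sum.inr : Fin n → Fin n ⊕ Fin n))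

/-- `Λ^n_N = {0} ⊕ ℂ^n`, the Neumann Lagrangian (first block vanishes). -/
def LnN (n : ℕ) : Submodule ℂ (CV n) :=
  LinearMap.ker (LinearMap.funLeft ℂ ℂ (Sum.inl : Fin n → Fin n ⊕ Fin n))

/-- `Λ_D = Λ^n_D ⊕ Λ^n_D ⊂ ℂ^{4n}`. -/
def LD (n : ℕ) : Submodule ℂ (CV n × CV n) := (LnD n).prod (LnD n)

/-- `Λ_N = Λ^n_N ⊕ Λ^n_N ⊂ ℂ^{4n}`. -/
def LN (n : ℕ) : Submodule ℂ (CV n × CV n) := (LnN n).prod (LnN n)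

/-- The Hermitian inner product on `ℂ^{2n} ⊕ ℂ^{2n}`. -/
def herm2 (n : ℕ) (p q : CV n × CV n) : ℂ := herm p.1 q.1 + herm p.2 q.2

lemma herm_add_right {m : Type*} [Fintype m] (x y z : m → ℂ) :
    herm x (y + z) = herm x y + herm x z := by
  simp [herm, Pi.add_apply, map_add, mul_add, Finset.sum_add_distrib]

lemma herm_smul_right {m : Type*} [Fintype m] (c : ℂ) (x y : m → ℂ) :
    herm x (c • y) = (starRingEnd ℂ) c * herm x y := by
  simp only [herm, Pi.smul_apply, smul_eq_mul, _root_.map_mul, Finset.mul_sum]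
  exact Finset.sum_congr rfl fun i _ => by ring

lemma herm2_add_right (n : ℕ) (x y z : CV n × CV n) :
    herm2 n x (y + z) = herm2 n x y + herm2 n x z := by
  simp only [herm2, Prod.fst_add, Prod.snd_add, herm_add_right]; ring

lemma herm2_smul_right (n : ℕ) (c : ℂ) (x y : CV n × CV n) :
    herm2 n x (c • y) = (starRingEnd ℂ) c * herm2 n x y := by
  simp only [herm2, Prod.smul_fst, Prod.smul_snd, herm_smul_right]; ring

/-- The orthogonal complement of `V` inside `Λ_N`, with respect to the standard
Hermitian inner product of `ℂ^{4n}`. -/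
def perpIn (n : ℕ) (V : Submodule ℂ (CV n × CV n)) : Submodule ℂ (CV n × CV n) where
  carrier := {p | p ∈ LN n ∧ ∀ v ∈ V, herm2 n v p = 0}
  add_mem' := by
    rintro a b ⟨haN, ha⟩ ⟨hbN, hb⟩
    exact ⟨(LN n).add_mem haN hbN, fun v hv => by
      rw [herm2_add_right, ha v hv, hb v hv, add_zero]⟩
  zero_mem' := ⟨(LN n).zero_mem, fun v hv => by simp [herm2, herm]⟩
  smul_mem' := by
    rintro c p ⟨hpN, hp⟩
    exact ⟨(LN n).smul_mem c hpN, fun v hv => by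
      rw [herm2_smul_right, hp v hv, mul_zero]⟩

/-- The map `𝒥 = (−J) ⊕ J` on `ℂ^{2n} ⊕ ℂ^{2n}`. -/
def calJ (n : ℕ) : (CV n × CV n) →ₗ[ℂ] (CV n × CV n) :=
  LinearMap.prodMap (-(Matrix.J (Fin n) ℂ)).mulVecLin (Matrix.J (Fin n) ℂ).mulVecLin

/-- `Gr(−I_n) = {(u,−u) : u ∈ ℂ^n}` viewed inside `Λ_N ≅ ℂ^n ⊕ ℂ^n`. -/
def grNeg (n : ℕ) : Submodule ℂ (CV n × CV n) where
  carrier := {p | p.1 ∈ LnN n ∧ p.2 = - p.1}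
  add_mem' := by
    rintro a b ⟨ha1, ha2⟩ ⟨hb1, hb2⟩
    refine ⟨(LnN n).add_mem ha1 hb1, ?_⟩
    simp only [Prod.fst_add, Prod.snd_add, ha2, hb2]
    abel
  zero_mem' := ⟨(LnN n).zero_mem, by simp⟩
  smul_mem' := by
    rintro c p ⟨h1, h2⟩
    exact ⟨(LnN n).smul_mem c h1, by simp only [Prod.smul_fst, Prod.smul_snd, h2, smul_neg]⟩

lemma calJ_fst_inl (n : ℕ) (p : CV n × CV n) (i : Fin n) :
    (calJ n p).1 (Sum.inl i) = p.1 (Sum.inr i) := by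
  simp [calJ, Matrix.J, Matrix.mulVec, dotProduct, Fintype.sum_sum_type, Matrix.one_apply]

lemma calJ_fst_inr (n : ℕ) (p : CV n × CV n) (i : Fin n) :
    (calJ n p).1 (Sum.inr i) = - p.1 (Sum.inl i) := by
  simp [calJ, Matrix.J, Matrix.mulVec, dotProduct, Fintype.sum_sum_type, Matrix.one_apply]

lemma calJ_snd_inl (n : ℕ) (p : CV n × CV n) (i : Fin n) :
    (calJ n p).2 (Sum.inl i) = - p.2 (Sum.inr i) := by
  simp [calJ, Matrix.J, Matrix.mulVec, dotProduct, Fintype.sum_sum_type, Matrix.one_apply]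

lemma calJ_snd_inr (n : ℕ) (p : CV n × CV n) (i : Fin n) :
    (calJ n p).2 (Sum.inr i) = p.2 (Sum.inl i) := by
  simp [calJ, Matrix.J, Matrix.mulVec, dotProduct, Fintype.sum_sum_type, Matrix.one_apply]

lemma calJ_inj (n : ℕ) : Function.Injective (calJ n) := by
  rw [injective_iff_map_eq_zero]
  intro p hp
  have h1 := calJ_fst_inl n p
  have h2 := calJ_fst_inr n p
  have h3 := calJ_snd_inl n p
  have h4 := calJ_snd_inr n p
  rw [hp] at h1 h2 h3 h4
  ext i <;> rcases i with i | i
  · simpa using h2 i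
  · simpa using (h1 i).symm
  · simpa using (h4 i).symm
  · simpa using h3 i

lemma symForm_eq (n : ℕ) (x y : CV n) :
    symForm n x y = ∑ i, (- x (Sum.inr i) * (starRingEnd ℂ) (y (Sum.inl i))) +
      ∑ i, x (Sum.inl i) * (starRingEnd ℂ) (y (Sum.inr i)) := by
  simp [symForm, herm, Matrix.J, Matrix.mulVec, dotProduct, Fintype.sum_sum_type,
    Matrix.one_apply]

lemma mem_LN' (n : ℕ) (p : CV n × CV n) :
    p ∈ LN n ↔ (∀ i, p.1 (Sum.inl i) = 0) ∧ ∀ i, p.2 (Sum.inl i) = 0 := by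
  simp [LN, LnN, Submodule.mem_prod, funext_iff, LinearMap.funLeft_apply]

lemma mem_LD' (n : ℕ) (p : CV n × CV n) :
    p ∈ LD n ↔ (∀ i, p.1 (Sum.inr i) = 0) ∧ ∀ i, p.2 (Sum.inr i) = 0 := by
  simp [LD, LnD, Submodule.mem_prod, funext_iff, LinearMap.funLeft_apply]

lemma mem_grNeg' (n : ℕ) (p : CV n × CV n) :
    p ∈ grNeg n ↔ (∀ i, p.1 (Sum.inl i) = 0) ∧ p.2 = - p.1 := by
  change (p.1 ∈ LnN n ∧ _) ↔ _
  simp [LnN, funext_iff, LinearMap.funLeft_apply]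

lemma mem_perpIn' (n : ℕ) (V : Submodule ℂ (CV n × CV n)) (p : CV n × CV n) :
    p ∈ perpIn n V ↔ p ∈ LN n ∧ ∀ v ∈ V, herm2 n v p = 0 := Iff.rfl

/-- The form `𝔔` vanishes identically. -/
lemma form_zero (n : ℕ) (V : Submodule ℂ (CV n × CV n)) (hV : V ≤ LN n)
    (x y z : CV n × CV n) (hx : x.1 = x.2)
    (hy : y ∈ (perpIn n V).map (calJ n) ⊔ V) (hz : z ∈ LD n) (h : x = y + z) :
    symForm2 n y z = 0 := by
  obtain ⟨_, ⟨p, hp, rfl⟩, v, hv, rfl⟩ := Submodule.mem_sup.1 hy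
  obtain ⟨hpN, hp⟩ := hp
  have ho := hp v hv
  obtain ⟨p1, p2⟩ := (mem_LN' n p).1 hpN
  obtain ⟨v1, v2⟩ := (mem_LN' n v).1 (hV hv)
  obtain ⟨z1, z2⟩ := (mem_LD' n z).1 hz
  subst h
  have e1 : ∀ i, v.1 (Sum.inr i) = v.2 (Sum.inr i) := fun i => by
    have := congrFun hx (Sum.inr i)
    simpa [calJ_fst_inr, calJ_snd_inr, p1, p2, z1, z2] using this
  have e2 : ∀ i, z.2 (Sum.inl i) = p.1 (Sum.inr i) + z.1 (Sum.inl i) + p.2 (Sum.inr i) :=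
    fun i => by
      have := congrFun hx (Sum.inl i)
      simp [calJ_fst_inl, calJ_snd_inl, v1, v2] at this
      rw [this]; ring
  simp only [herm2, herm, Fintype.sum_sum_type, v1, v2, zero_mul, Finset.sum_const_zero,
    zero_add, e1] at ho
  simp only [symForm2, symForm_eq, z1, z2, map_zero, mul_zero, Finset.sum_const_zero, add_zero,
    Prod.fst_add, Prod.snd_add, Pi.add_apply, calJ_fst_inr, calJ_snd_inr, p1, p2, neg_zero,
    zero_add, e1, e2]
  rw [← Finset.sum_add_distrib] at ho
  rw [← Finset.sum_neg_distrib, ← Finset.sum_add_distrib, ← neg_eq_zero, ← ho,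
    ← Finset.sum_neg_distrib]
  refine Finset.sum_congr rfl fun i _ => ?_
  simp only [map_add]
  ring

/-- For `V ⊆ Λ_N` and `Λ_V = 𝒥V^⊥ ⊕ V`,
`i(Gr(I_{2n}), Λ_V, Λ_D) = n − dim(V^⊥ ∩ Gr(−I_n))`. -/
theorem tripleIdx_graph_id_LV (n : ℕ)
    (V : Submodule ℂ (CV n × CV n)) (hV : V ≤ LN n) :
    tripleIdx (symForm2 n)
      (LinearMap.graph (LinearMap.id : CV n →ₗ[ℂ] CV n))
      ((perpIn n V).map (calJ n) ⊔ V) (LD n)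
    = n - Module.finrank ℂ ↥(perpIn n V ⊓ grNeg n) := by
  have hg : ∀ x : CV n × CV n,
      x ∈ LinearMap.graph (LinearMap.id : CV n →ₗ[ℂ] CV n) ↔ x.1 = x.2 := fun x => by
    rw [LinearMap.mem_graph_iff]
    exact eq_comm
  have hpos : posInd (symForm2 n) (LinearMap.graph (LinearMap.id : CV n →ₗ[ℂ] CV n))
      ((perpIn n V).map (calJ n) ⊔ V) (LD n) = 0 := by
    unfold posInd
    refine Nat.le_zero.1 (csSup_le' ?_)
    rintro k ⟨P, hP, hpd, rfl⟩
    have : P = ⊥ := by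
      rw [Submodule.eq_bot_iff]
      intro x hx
      by_contra hne
      obtain ⟨hxg, hxs⟩ := hP hx
      obtain ⟨y, hy, z, hz, h⟩ := Submodule.mem_sup.1 hxs
      have h1 := hpd x hx hne y hy z hz h.symm
      rw [form_zero n V hV x y z ((hg x).1 hxg) hy hz h.symm] at h1
      simp at h1
    simp [this]
  have hdim : Module.finrank ℂ
      ↥(LinearMap.graph (LinearMap.id : CV n →ₗ[ℂ] CV n) ⊓ LD n) = n := by
    let f : (Fin n → ℂ) →ₗ[ℂ] CV n × CV n :=
      { toFun := fun a => (Sum.elim a 0, Sum.elim a 0)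
        map_add' := fun a b => by ext i <;> rcases i with i | i <;> simp
        map_smul' := fun a b => by ext i <;> rcases i with i | i <;> simp }
    have hf : Function.Injective f := fun a b hab => by
      funext i
      exact congrFun (congrArg Prod.fst hab) (Sum.inl i)
    have hr : LinearMap.graph (LinearMap.id : CV n →ₗ[ℂ] CV n) ⊓ LD n = LinearMap.range f := by
      ext x
      rw [Submodule.mem_inf, hg, mem_LD', LinearMap.mem_range]
      constructor
      · rintro ⟨h, h1, h2⟩
        refine ⟨fun i => x.1 (Sum.inl i), ?_⟩
        refine Prod.ext (funext ?_) (funext ?_) <;> rintro (i | i)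
        · rfl
        · exact (h1 i).symm
        · rw [← h]; rfl
        · exact (h2 i).symm
      · rintro ⟨a, rfl⟩
        exact ⟨rfl, fun i => rfl, fun i => rfl⟩
    rw [hr, LinearMap.finrank_range_of_inj hf]
    simp
  have hint : LinearMap.graph (LinearMap.id : CV n →ₗ[ℂ] CV n) ⊓
      ((perpIn n V).map (calJ n) ⊔ V) ⊓ LD n = (perpIn n V ⊓ grNeg n).map (calJ n) := by
    ext x
    rw [Submodule.mem_inf, Submodule.mem_inf, hg, mem_LD']
    constructor
    · rintro ⟨⟨hx, hs⟩, d1, d2⟩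
      obtain ⟨_, ⟨p, hp, rfl⟩, v, hv, rfl⟩ := Submodule.mem_sup.1 hs
      obtain ⟨p1, p2⟩ := (mem_LN' n p).1 hp.1
      obtain ⟨v1, v2⟩ := (mem_LN' n v).1 (hV hv)
      have hv0 : v = 0 := by
        refine Prod.ext (funext ?_) (funext ?_) <;> rintro (i | i)
        · exact v1 i
        · simpa [calJ_fst_inr, p1] using d1 i
        · exact v2 i
        · simpa [calJ_snd_inr, p2] using d2 i
      subst hv0
      rw [add_zero] at hx ⊢
      refine ⟨p, ⟨hp, (mem_grNeg' n p).2 ⟨p1, ?_⟩⟩, rfl⟩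
      funext i
      rcases i with i | i
      · simp [p1, p2]
      · have := congrFun hx (Sum.inl i)
        rw [calJ_fst_inl, calJ_snd_inl] at this
        simp [this]
    · rintro ⟨p, ⟨hp, hpg⟩, rfl⟩
      obtain ⟨p1, p2⟩ := (mem_LN' n p).1 hp.1
      obtain ⟨_, h2⟩ := (mem_grNeg' n p).1 hpg
      refine ⟨⟨?_, Submodule.mem_sup_left ⟨p, hp, rfl⟩⟩, fun i => ?_, fun i => ?_⟩
      · funext i
        rcases i with i | i
        · rw [calJ_fst_inl, calJ_snd_inl, h2]; simp
        · rw [calJ_fst_inr, calJ_snd_inr, p1, p2]; simp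
      · rw [calJ_fst_inr, p1]; simp
      · rw [calJ_snd_inr, p2]
  unfold tripleIdx
  rw [hpos, hdim, hint, zero_add,
    LinearEquiv.finrank_eq (Submodule.equivMapOfInjective (calJ n) (calJ_inj n) _).symm]
end
end

section
/- Let A_s and A_e be n×n Hermitian matrices and set Λ_s = {(A_s x, x) : x ∈ ℂ^n} and Λ_e = {(A_e x, x) : x ∈ ℂ^n}, which are Lagrangian subspaces of (ℂ^{2n}, ω). Then m⁺(𝔔(Λ_s, Λ_e; Λ^n_D)) = m⁺(A_e − A_s), and consequently i(Gr(I_{2n}), Λ_s⊕Λ_e, Λ_D) = n + m⁺(A_e − A_s), where m⁺(A_e − A_s) is the number of positive eigenvalues of A_e − A_s counted with multiplicity. -/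
open Matrix Module Submodule

noncomputable section

/-- The Lagrangian subspace `{(A x, x) : x ∈ ℂ^n}` of `ℂ^{2n}` associated to a
Hermitian matrix `A`. -/
def graphLag (n : ℕ) (A : Matrix (Fin n) (Fin n) ℂ) : Submodule ℂ (CV n) :=
  LinearMap.range
    ((LinearEquiv.sumArrowLequivProdArrow (Fin n) (Fin n) ℂ ℂ).symm.toLinearMap ∘ₗ
      (A.mulVecLin.prod LinearMap.id))

theorem posInd_eq_card {X ι : Type*} [AddCommGroup X] [Module ℂ X] [Fintype ι]
    (w : X → X → ℂ) (α β κ : Submodule ℂ X) (g : X →ₗ[ℂ] (ι → ℂ)) (h : (ι → ℂ) →ₗ[ℂ] X)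
    (hg : ∀ x ∈ α ⊓ (β ⊔ κ), g x = 0 → ∃ y ∈ β, ∃ z ∈ κ, x = y + z ∧ (w y z).re ≤ 0)
    (hinj : Function.Injective h)
    (hmem : ∀ c, h c ∈ α ⊓ (β ⊔ κ))
    (hpos : ∀ c, c ≠ 0 → ∀ y ∈ β, ∀ z ∈ κ, h c = y + z → 0 < (w y z).re) :
    posInd w α β κ = Fintype.card ι := by
  unfold posInd
  apply IsGreatest.csSup_eq
  constructor
  · refine ⟨LinearMap.range h, ?_, ?_, ?_⟩
    · rintro _ ⟨c, rfl⟩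
      exact hmem c
    · rintro _ ⟨c, rfl⟩ hc
      apply hpos
      rintro rfl
      simp at hc
    · rw [LinearMap.finrank_range_of_inj hinj]
      simp
  · rintro k ⟨P, hP, hPpos, rfl⟩
    have hi : Function.Injective (g ∘ₗ P.subtype) := by
      rw [injective_iff_map_eq_zero]
      rintro ⟨x, hx⟩ hgx
      by_contra hne
      obtain ⟨y, hy, z, hz, hxyz, hle⟩ := hg x (hP hx) hgx
      have := hPpos x hx (by simpa using hne) y hy z hz hxyz
      linarith
    have := LinearMap.finrank_le_finrank_of_injective hi
    simpa using this

theorem herm_adj {n : ℕ} (U : Matrix (Fin n) (Fin n) ℂ) (u v : Fin n → ℂ) :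
    herm u (U *ᵥ v) = herm (Uᴴ *ᵥ u) v := by
  have key : ∀ a b : Fin n → ℂ, herm a b = a ⬝ᵥ star b := fun a b => rfl
  rw [key, key, star_mulVec, dotProduct_comm, ← dotProduct_mulVec, dotProduct_comm]

theorem herm_sub_right {n : ℕ} (u v v' : Fin n → ℂ) :
    herm u (v - v') = herm u v - herm u v' := by
  simp [herm, mul_sub]

theorem herm_diag {n : ℕ} (A : Matrix (Fin n) (Fin n) ℂ) (hA : A.IsHermitian) (u : Fin n → ℂ) :
    (herm u (A *ᵥ u)).re = ∑ i, hA.eigenvalues i *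
      Complex.normSq (((hA.eigenvectorUnitary : Matrix (Fin n) (Fin n) ℂ)ᴴ *ᵥ u) i) := by
  have hs : A = (hA.eigenvectorUnitary : Matrix (Fin n) (Fin n) ℂ) *
      diagonal (fun i => (hA.eigenvalues i : ℂ)) *
      (hA.eigenvectorUnitary : Matrix (Fin n) (Fin n) ℂ)ᴴ := by
    have := hA.spectral_theorem
    rw [Unitary.conjStarAlgAut_apply] at this
    exact this
  set U := (hA.eigenvectorUnitary : Matrix (Fin n) (Fin n) ℂ)
  have h1 : A *ᵥ u = U *ᵥ (diagonal (fun i => (hA.eigenvalues i : ℂ)) *ᵥ (Uᴴ *ᵥ u)) := by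
    conv_lhs => rw [hs]
    simp [mulVec_mulVec, Matrix.mul_assoc]
  rw [h1, herm_adj]
  unfold herm
  rw [Complex.re_sum]
  refine Finset.sum_congr rfl fun i _ => ?_
  rw [mulVec_diagonal]
  simp [Complex.normSq_apply]
  ring

theorem diag_maps {n : ℕ} (A : Matrix (Fin n) (Fin n) ℂ) (hA : A.IsHermitian) :
    ∃ (g : (Fin n → ℂ) →ₗ[ℂ] ({i // 0 < hA.eigenvalues i} → ℂ))
      (h : ({i // 0 < hA.eigenvalues i} → ℂ) →ₗ[ℂ] (Fin n → ℂ)),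
      (∀ u, g u = 0 → (herm u (A *ᵥ u)).re ≤ 0) ∧ Function.Injective h ∧
      ∀ c, c ≠ 0 → 0 < (herm (h c) (A *ᵥ h c)).re := by
  classical
  have hU : (hA.eigenvectorUnitary : Matrix (Fin n) (Fin n) ℂ)ᴴ *
    (hA.eigenvectorUnitary : Matrix (Fin n) (Fin n) ℂ) = 1 :=
      Unitary.coe_star_mul_self hA.eigenvectorUnitary
  have hd := herm_diag A hA
  set U := (hA.eigenvectorUnitary : Matrix (Fin n) (Fin n) ℂ)
  let e : ({i // 0 < hA.eigenvalues i} → ℂ) →ₗ[ℂ] (Fin n → ℂ) :=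
    Function.ExtendByZero.linearMap ℂ Subtype.val
  have he : ∀ c (i : {i // 0 < hA.eigenvalues i}), e c i.1 = c i := fun c i =>
    Subtype.val_injective.extend_apply c 0 i
  have he0 : ∀ c i, ¬ 0 < hA.eigenvalues i → e c i = 0 := fun c i hi => by
    exact Function.extend_apply' (f := Subtype.val) c (0 : Fin n → ℂ) i
      (by rintro ⟨a, rfl⟩; exact hi a.2)
  have hUe : ∀ c, Uᴴ *ᵥ (U *ᵥ e c) = e c := fun c => by simp [mulVec_mulVec, hU]
  have hpos : ∀ c, c ≠ 0 → 0 < (herm (U *ᵥ e c) (A *ᵥ (U *ᵥ e c))).re := by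
    intro c hc
    rw [hd, hUe]
    obtain ⟨i, hi⟩ := Function.ne_iff.1 hc
    refine Finset.sum_pos' (fun j _ => ?_) ⟨i.1, Finset.mem_univ _, ?_⟩
    · by_cases hj : 0 < hA.eigenvalues j
      · exact mul_nonneg hj.le (Complex.normSq_nonneg _)
      · simp [he0 c j hj]
    · rw [he]
      exact mul_pos i.2 (Complex.normSq_pos.2 hi)
  refine ⟨LinearMap.funLeft ℂ ℂ Subtype.val ∘ₗ Uᴴ.mulVecLin, U.mulVecLin ∘ₗ e, ?_, ?_, ?_⟩
  · intro u hu
    rw [hd]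
    refine Finset.sum_nonpos fun i _ => ?_
    by_cases hi : 0 < hA.eigenvalues i
    · have : (Uᴴ *ᵥ u) i = 0 := congrFun hu ⟨i, hi⟩
      simp [this]
    · exact mul_nonpos_of_nonpos_of_nonneg (not_lt.1 hi) (Complex.normSq_nonneg _)
  · rw [injective_iff_map_eq_zero]
    intro c hc
    by_contra hne
    have := hpos c hne
    have hc' : U *ᵥ e c = 0 := hc
    rw [hc'] at this
    simp [herm] at this
  · exact hpos

theorem mem_graphLag {n : ℕ} (A : Matrix (Fin n) (Fin n) ℂ) (x : CV n) :
    x ∈ graphLag n A ↔ x ∘ Sum.inl = A *ᵥ (x ∘ Sum.inr) := by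
  unfold graphLag
  constructor
  · rintro ⟨u, rfl⟩
    rfl
  · intro h
    refine ⟨x ∘ Sum.inr, ?_⟩
    ext (i | i)
    · exact (congrFun h i).symm
    · rfl

theorem mem_LnD {n : ℕ} (x : CV n) : x ∈ LnD n ↔ x ∘ Sum.inr = 0 := Iff.rfl

theorem symForm_eq_s12 {n : ℕ} (y z : CV n) (hz : z ∈ LnD n) :
    symForm n y z = - herm (y ∘ Sum.inr) (z ∘ Sum.inl) := by
  have h0 : ∀ i, z (Sum.inr i) = 0 := fun i => congrFun hz i
  simp [symForm, herm, Fintype.sum_sum_type, h0, Matrix.J, fromBlocks_mulVec, neg_mulVec]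

/-- second block -/
def sndB (n : ℕ) : CV n →ₗ[ℂ] (Fin n → ℂ) := LinearMap.funLeft ℂ ℂ Sum.inr

/-- the parametrisation of the graph Lagrangian -/
def gmap (n : ℕ) (A : Matrix (Fin n) (Fin n) ℂ) : (Fin n → ℂ) →ₗ[ℂ] CV n :=
    ((LinearEquiv.sumArrowLequivProdArrow (Fin n) (Fin n) ℂ ℂ).symm.toLinearMap ∘ₗ
      (A.mulVecLin.prod LinearMap.id))

/-- decomposition of any vector -/
theorem decomp {n : ℕ} (A : Matrix (Fin n) (Fin n) ℂ) (x : CV n) :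
    ∃ y ∈ graphLag n A, ∃ z ∈ LnD n, x = y + z := by
  refine ⟨gmap n A (x ∘ Sum.inr), ⟨_, rfl⟩, x - gmap n A (x ∘ Sum.inr), ?_, by simp⟩
  rw [mem_LnD]
  ext i
  exact sub_self _

theorem symForm_decomp {n : ℕ} (A : Matrix (Fin n) (Fin n) ℂ) (x y z : CV n)
    (hy : y ∈ graphLag n A) (hz : z ∈ LnD n) (h : x = y + z) :
    symForm n y z = herm (x ∘ Sum.inr) (A *ᵥ (x ∘ Sum.inr)) -
      herm (x ∘ Sum.inr) (x ∘ Sum.inl) := by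
  rw [symForm_eq_s12 y z hz]
  have h1 : x ∘ Sum.inr = y ∘ Sum.inr := by
    have : z ∘ Sum.inr = 0 := hz
    subst h
    ext i
    simpa using congrFun this i
  have h2 : z ∘ Sum.inl = x ∘ Sum.inl - A *ᵥ (x ∘ Sum.inr) := by
    rw [h1, ← (mem_graphLag A y).1 hy, h]
    ext i
    simp
  rw [h2, ← h1, herm_sub_right]
  ring

/-- For `Λ_s = {(A_s x, x)}`, `Λ_e = {(A_e x, x)}` with `A_s, A_e` Hermitian:
`m⁺(𝔔(Λ_s,Λ_e;Λ^n_D)) = m⁺(A_e − A_s)` and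
`i(Gr(I_{2n}), Λ_s⊕Λ_e, Λ_D) = n + m⁺(A_e − A_s)`. -/
theorem posInd_graphLag (n : ℕ) (As Ae : Matrix (Fin n) (Fin n) ℂ)
    (hAs : As.IsHermitian) (hAe : Ae.IsHermitian) :
    posInd (symForm n) (graphLag n As) (graphLag n Ae) (LnD n)
      = Fintype.card {i // 0 < (hAe.sub hAs).eigenvalues i}
    ∧ tripleIdx (symForm2 n)
        (LinearMap.graph (LinearMap.id : CV n →ₗ[ℂ] CV n))
        ((graphLag n As).prod (graphLag n Ae)) (LD n)
      = n + Fintype.card {i // 0 < (hAe.sub hAs).eigenvalues i} := by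
  obtain ⟨g, h, hg, hinj, hpos⟩ := diag_maps (Ae - As) (hAe.sub hAs)
  have hginj : Function.Injective (gmap n As) := by
    intro u v huv
    exact congrArg (sndB n) huv
  have hdiff : ∀ u, herm u ((Ae - As) *ᵥ u) = herm u (Ae *ᵥ u) - herm u (As *ᵥ u) := by
    intro u
    rw [sub_mulVec, herm_sub_right]
  constructor
  · have key : ∀ x ∈ graphLag n As, ∀ y ∈ graphLag n Ae, ∀ z ∈ LnD n, x = y + z →
        symForm n y z = herm (sndB n x) ((Ae - As) *ᵥ sndB n x) := by
      intro x hx y hy z hz hxyz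
      rw [symForm_decomp Ae x y z hy hz hxyz, (mem_graphLag As x).1 hx, hdiff]
      rfl
    refine posInd_eq_card _ _ _ _ (g ∘ₗ sndB n) (gmap n As ∘ₗ h) ?_ (hginj.comp hinj) ?_ ?_
    · intro x hx hgx
      obtain ⟨y, hy, z, hz, hxyz⟩ := decomp Ae x
      refine ⟨y, hy, z, hz, hxyz, ?_⟩
      rw [key x hx.1 y hy z hz hxyz]
      exact hg _ hgx
    · intro c
      refine ⟨⟨h c, rfl⟩, ?_⟩
      obtain ⟨y, hy, z, hz, hxyz⟩ := decomp Ae ((gmap n As ∘ₗ h) c)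
      exact Submodule.mem_sup.2 ⟨y, hy, z, hz, hxyz.symm⟩
    · intro c hc y hy z hz hxyz
      rw [key _ ⟨h c, rfl⟩ y hy z hz hxyz]
      exact hpos c hc
  · have key : ∀ x : CV n, ∀ y ∈ (graphLag n As).prod (graphLag n Ae), ∀ z ∈ LD n,
        (x, x) = y + z →
        symForm2 n y z = herm (sndB n x) ((Ae - As) *ᵥ sndB n x) := by
      rintro x ⟨y1, y2⟩ hy ⟨z1, z2⟩ hz hxyz
      rw [Prod.mk_add_mk, Prod.mk.injEq] at hxyz
      simp only [symForm2]
      rw [symForm_decomp As x y1 z1 hy.1 hz.1 hxyz.1, symForm_decomp Ae x y2 z2 hy.2 hz.2 hxyz.2,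
        hdiff]
      change _ = herm (x ∘ Sum.inr) (Ae *ᵥ (x ∘ Sum.inr)) - herm (x ∘ Sum.inr) (As *ᵥ (x ∘ Sum.inr))
      ring
    have dec : ∀ x : CV n, ∃ y ∈ (graphLag n As).prod (graphLag n Ae), ∃ z ∈ LD n,
        (x, x) = y + z := by
      intro x
      obtain ⟨y1, hy1, z1, hz1, h1⟩ := decomp As x
      obtain ⟨y2, hy2, z2, hz2, h2⟩ := decomp Ae x
      exact ⟨(y1, y2), ⟨hy1, hy2⟩, (z1, z2), ⟨hz1, hz2⟩, Prod.ext h1 h2⟩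
    have hp : posInd (symForm2 n) (LinearMap.graph (LinearMap.id : CV n →ₗ[ℂ] CV n))
        ((graphLag n As).prod (graphLag n Ae)) (LD n)
        = Fintype.card {i // 0 < (hAe.sub hAs).eigenvalues i} := by
      refine posInd_eq_card _ _ _ _ (g ∘ₗ sndB n ∘ₗ LinearMap.fst ℂ _ _)
        ((LinearMap.id.prod LinearMap.id) ∘ₗ gmap n As ∘ₗ h) ?_ ?_ ?_ ?_
      · rintro ⟨x, x'⟩ hx hgx
        have hxx : x' = x := (LinearMap.mem_graph_iff _ _).1 hx.1
        subst hxx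
        obtain ⟨y, hy, z, hz, hxyz⟩ := dec x'
        refine ⟨y, hy, z, hz, hxyz, ?_⟩
        rw [key x' y hy z hz hxyz]
        exact hg _ hgx
      · intro c d hcd
        exact hinj (hginj (congrArg Prod.fst hcd))
      · intro c
        refine ⟨(LinearMap.mem_graph_iff _ _).2 rfl, ?_⟩
        obtain ⟨y, hy, z, hz, hxyz⟩ := dec (gmap n As (h c))
        exact Submodule.mem_sup.2 ⟨y, hy, z, hz, hxyz.symm⟩
      · intro c hc y hy z hz hxyz
        rw [key (gmap n As (h c)) y hy z hz hxyz]
        exact hpos c hc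
    have hbot : LinearMap.graph (LinearMap.id : CV n →ₗ[ℂ] CV n) ⊓
        ((graphLag n As).prod (graphLag n Ae)) ⊓ LD n = ⊥ := by
      rw [eq_bot_iff]
      rintro ⟨x, x'⟩ ⟨⟨h1, h2⟩, h3⟩
      have hxx : x' = x := (LinearMap.mem_graph_iff _ _).1 h1
      subst hxx
      have hr : x' ∘ Sum.inr = 0 := h3.1
      have hl := (mem_graphLag As x').1 h2.1
      rw [hr, mulVec_zero] at hl
      have : x' = 0 := by
        ext (i | i)
        · exact congrFun hl i
        · exact congrFun hr i
      simp [this]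
    have hn : Module.finrank ℂ
        ↥(LinearMap.graph (LinearMap.id : CV n →ₗ[ℂ] CV n) ⊓ LD n) = n := by
      let f : (Fin n → ℂ) →ₗ[ℂ] CV n :=
        (LinearEquiv.sumArrowLequivProdArrow (Fin n) (Fin n) ℂ ℂ).symm.toLinearMap ∘ₗ
          LinearMap.inl ℂ _ _
      let F : (Fin n → ℂ) →ₗ[ℂ] CV n × CV n := f.prod f
      have hF : Function.Injective F := by
        intro u v huv
        have := congrArg Prod.fst huv
        ext i
        exact congrFun this (Sum.inl i)
      have hr : LinearMap.graph (LinearMap.id : CV n →ₗ[ℂ] CV n) ⊓ LD n = LinearMap.range F := by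
        apply le_antisymm
        · rintro ⟨x, x'⟩ ⟨h1, h3⟩
          have hxx : x' = x := (LinearMap.mem_graph_iff _ _).1 h1
          subst hxx
          have hr : x' ∘ Sum.inr = 0 := h3.1
          have : f (x' ∘ Sum.inl) = x' := by
            ext (i | i)
            · rfl
            · exact (congrFun hr i).symm
          exact ⟨x' ∘ Sum.inl, Prod.ext this this⟩
        · rintro _ ⟨u, rfl⟩
          exact ⟨(LinearMap.mem_graph_iff _ _).2 rfl, rfl, rfl⟩
      rw [hr, LinearMap.finrank_range_of_inj hF]
      simp
    unfold tripleIdx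
    rw [hp, hbot, hn, finrank_bot]
    omega
end
end
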